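/- The sentence "for all x, if V(x) = x then for all y with x < y < x + x one has V(y) < y", which is true in (ℕ, +, V₂), fails in the structure (M, +, V_M): there exist x, y ∈ M with V_M(x) = x, x < y, y < x + x, and V_M(y) = y (for instance x = (1, 0) and y = (3/2, 0)). Here u < v means that there exists nonzero z ∈ M with u + z = v. Consequently, the Presburger axioms together with the inductive definition of V₂ do not axiomatize Büchi arithmetic BA₂. -/

import Mathlib

/-- `V₂ x` is the largest power of 2 dividing `x`, with `V₂ 0 = 0`. -/
def V2 (x : ℕ) : ℕ := if x = 0 then 0 else 2 ^ padicValNat 2 x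

/-- The set `M = {(p, q) : ℚ × ℤ | 0 ≤ p ∧ (p = 0 → 0 ≤ q)}`. -/
def M : Set (ℚ × ℤ) := {x | 0 ≤ x.1 ∧ (x.1 = 0 → 0 ≤ x.2)}

/-- The function `V_M` on (ambient) `ℚ × ℤ`, matching on `M` the definition:
`V_M (0, n) = (0, V₂ n)`; `V_M (p, q) = (0, 1)` if `p ≠ 0` and `q` odd;
`V_M (p, q) = (0, V₂ |q|)` if `p ≠ 0`, `q` even, `q ≠ 0`; `V_M (p, 0) = (p, 0)`
for `p ≠ 0`. -/
noncomputable def VM (x : ℚ × ℤ) : ℚ × ℤ :=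
  if x.1 = 0 then ((0 : ℚ), (V2 x.2.natAbs : ℤ))
  else if x.2 = 0 then (x.1, 0)
  else if Odd x.2 then ((0 : ℚ), (1 : ℤ))
  else ((0 : ℚ), (V2 x.2.natAbs : ℤ))

/-! The nonzero fixed points of `V₂` are the powers of 2, and no power of 2 lies strictly between
`x` and `2x` when `x` is one. On the other side, `M` is the nonnegative cone of the lexicographic
order on `ℚ × ℤ`, so `u < v` in the sense of `M` is that order. Since `V_M` fixes every `(p, 0)`,
the sentence fails at `(p, 0)` and `(r, 0)` as soon as `0 < p < r < 2p`. -/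

theorem V2_le_self (x : ℕ) : V2 x ≤ x := by
  rcases eq_or_ne x 0 with rfl | hx
  · simp [V2]
  · simpa [V2, hx] using Nat.le_of_dvd (Nat.pos_of_ne_zero hx) pow_padicValNat_dvd

theorem V2_eq_self_iff {x : ℕ} (hx : x ≠ 0) : V2 x = x ↔ x.isPowerOfTwo := by
  rw [V2, if_neg hx]
  constructor
  · exact fun h => ⟨padicValNat 2 x, h.symm⟩
  · rintro ⟨k, rfl⟩
    rw [padicValNat.prime_pow]

theorem not_isPowerOfTwo_of_lt_of_lt_add_self {x y : ℕ} (hx : x.isPowerOfTwo) (hxy : x < y)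
    (hyx : y < x + x) : ¬ y.isPowerOfTwo := by
  rintro ⟨n, rfl⟩
  obtain ⟨m, rfl⟩ := hx
  rw [← two_mul, ← pow_succ'] at hyx
  have hmn : m < n := (Nat.pow_lt_pow_iff_right one_lt_two).mp hxy
  have hnm : n < m + 1 := (Nat.pow_lt_pow_iff_right one_lt_two).mp hyx
  omega

theorem V2_lt_self_of_lt_of_lt_add_self {x y : ℕ} (hx : V2 x = x) (hxy : x < y)
    (hyx : y < x + x) : V2 y < y := by
  have hx0 : x ≠ 0 := by omega
  have hy0 : y ≠ 0 := by omega
  refine (V2_le_self y).lt_of_ne fun hy => ?_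
  exact not_isPowerOfTwo_of_lt_of_lt_add_self ((V2_eq_self_iff hx0).mp hx) hxy hyx
    ((V2_eq_self_iff hy0).mp hy)

theorem mem_M_iff_toLex_nonneg {x : ℚ × ℤ} : x ∈ M ↔ 0 ≤ toLex x := by
  rw [← toLex_zero, Prod.Lex.toLex_le_toLex']
  simp only [M, Set.mem_ofPred_eq, Prod.fst_zero, Prod.snd_zero, eq_comm]

theorem exists_mem_M_add_eq_iff_toLex_lt {u v : ℚ × ℤ} :
    (∃ z ∈ M, z ≠ ((0 : ℚ), (0 : ℤ)) ∧ u + z = v) ↔ toLex u < toLex v := by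
  constructor
  · rintro ⟨z, hz, hz0, rfl⟩
    exact lt_add_of_pos_right (toLex u) ((mem_M_iff_toLex_nonneg.mp hz).lt_of_ne' hz0)
  · intro huv
    have hpos : 0 < toLex (v - u) := sub_pos.mpr huv
    exact ⟨v - u, mem_M_iff_toLex_nonneg.mpr hpos.le, hpos.ne', add_sub_cancel u v⟩

theorem mk_zero_mem_M_iff {p : ℚ} : (p, 0) ∈ M ↔ 0 ≤ p := by
  simp [M]

theorem VM_mk_zero (p : ℚ) : VM (p, 0) = (p, 0) := by
  by_cases hp : p = 0 <;> simp [VM, V2, hp]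

theorem exists_mem_M_mk_zero_add_eq {p r : ℚ} (h : p < r) :
    ∃ z ∈ M, z ≠ ((0 : ℚ), (0 : ℤ)) ∧ (p, 0) + z = (r, 0) :=
  exists_mem_M_add_eq_iff_toLex_lt.mpr (Prod.Lex.toLex_lt_toLex.mpr (Or.inl h))

/-- The sentence "for all `x`, if `V x = x` then every `y` with `x < y < x + x` has
`V y < y`" is true in `(ℕ, +, V₂)` but fails in `(M, +, V_M)`, where `u < v` means
`∃ z ∈ M, z ≠ (0,0) ∧ u + z = v`. -/
theorem sentence_true_in_N_fails_in_M :
    (∀ x y : ℕ, V2 x = x → x < y → y < x + x → V2 y < y) ∧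
    (∃ x ∈ M, ∃ y ∈ M,
      VM x = x ∧
      (∃ z ∈ M, z ≠ ((0 : ℚ), (0 : ℤ)) ∧ x + z = y) ∧
      (∃ z ∈ M, z ≠ ((0 : ℚ), (0 : ℤ)) ∧ y + z = x + x) ∧
      VM y = y) := by
  refine ⟨fun x y => V2_lt_self_of_lt_of_lt_add_self, (1, 0), ?_, (3 / 2, 0), ?_,
    VM_mk_zero 1, ?_, ?_, VM_mk_zero (3 / 2)⟩
  · exact mk_zero_mem_M_iff.mpr (by norm_num)
  · exact mk_zero_mem_M_iff.mpr (by norm_num)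
  · exact exists_mem_M_mk_zero_add_eq (by norm_num)
  · rw [Prod.mk_add_mk, add_zero]
    exact exists_mem_M_mk_zero_add_eq (by norm_num)
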